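/- There exists a unique ℂ-algebra antihomomorphism κ : Ã → Ã (i.e., a ℂ-linear unital map with κ(ab) = κ(b)κ(a) for all a, b; equivalently, an algebra homomorphism into the opposite algebra) satisfying κ(x) = x⁻¹, κ(x⁻¹) = x, κ(y) = −x⁻¹y, and κ(θ) = −qθ. -/

import Mathlib

/-!
`Ã`: the extended algebra of functions on the Z₃-graded quantum superspace,
the unital associative ℂ-algebra with generators `x`, `x⁻¹`, `y`, `θ`,
quotient of the free algebra by the two-sided ideal generated by
`x·x⁻¹ − 1`, `x⁻¹·x − 1`, `xy − q·yx`, `xθ − q·θx`, `yθ − q²·θy`, `y³`, `θ³`.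
-/

noncomputable section

inductive Gen : Type
  | x | xinv | y | th

abbrev FA : Type := FreeAlgebra ℂ Gen

def Xf : FA := FreeAlgebra.ι ℂ Gen.x
def XIf : FA := FreeAlgebra.ι ℂ Gen.xinv
def Yf : FA := FreeAlgebra.ι ℂ Gen.y
def Tf : FA := FreeAlgebra.ι ℂ Gen.th

/-- The defining relations of `Ã`. -/
inductive QRel (q : ℂ) : FA → FA → Prop
  | xxi : QRel q (Xf * XIf) 1
  | xix : QRel q (XIf * Xf) 1
  | xy : QRel q (Xf * Yf) (q • (Yf * Xf))
  | xth : QRel q (Xf * Tf) (q • (Tf * Xf))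
  | yth : QRel q (Yf * Tf) ((q ^ 2) • (Tf * Yf))
  | ycube : QRel q (Yf ^ 3) 0
  | thcube : QRel q (Tf ^ 3) 0

/-- The extended algebra `Ã` of functions on the Z₃-graded quantum superspace. -/
abbrev Atl (q : ℂ) : Type := RingQuot (QRel q)

def Xg (q : ℂ) : Atl q := RingQuot.mkAlgHom ℂ (QRel q) Xf
def XIg (q : ℂ) : Atl q := RingQuot.mkAlgHom ℂ (QRel q) XIf
def Yg (q : ℂ) : Atl q := RingQuot.mkAlgHom ℂ (QRel q) Yf
def Tg (q : ℂ) : Atl q := RingQuot.mkAlgHom ℂ (QRel q) Tf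

section Relations

variable (q : ℂ)

theorem Xg_mul_XIg : Xg q * XIg q = 1 := by
  simpa [Xg, XIg] using RingQuot.mkAlgHom_rel ℂ (QRel.xxi (q := q))

theorem XIg_mul_Xg : XIg q * Xg q = 1 := by
  simpa [Xg, XIg] using RingQuot.mkAlgHom_rel ℂ (QRel.xix (q := q))

theorem Xg_mul_Yg : Xg q * Yg q = q • (Yg q * Xg q) := by
  simpa [Xg, Yg] using RingQuot.mkAlgHom_rel ℂ (QRel.xy (q := q))

theorem Xg_mul_Tg : Xg q * Tg q = q • (Tg q * Xg q) := by
  simpa [Xg, Tg] using RingQuot.mkAlgHom_rel ℂ (QRel.xth (q := q))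

theorem Yg_mul_Tg : Yg q * Tg q = q ^ 2 • (Tg q * Yg q) := by
  simpa [Yg, Tg] using RingQuot.mkAlgHom_rel ℂ (QRel.yth (q := q))

theorem Yg_pow_three : Yg q ^ 3 = 0 := by
  simpa [Yg] using RingQuot.mkAlgHom_rel ℂ (QRel.ycube (q := q))

theorem Tg_pow_three : Tg q ^ 3 = 0 := by
  simpa [Tg] using RingQuot.mkAlgHom_rel ℂ (QRel.thcube (q := q))

/-- A `q`-commutation relation with an invertible element passes to its inverse. -/
theorem mul_inv_eq_smul_of_mul_eq_smul {R A : Type*} [CommSemiring R] [Semiring A] [Algebra R A]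
    {r : R} {x x' a : A} (hxx' : x * x' = 1) (hx'x : x' * x = 1) (h : x * a = r • (a * x)) :
    a * x' = r • (x' * a) :=
  calc a * x' = x' * (x * a) * x' := by rw [← mul_assoc, hx'x, one_mul]
    _ = r • (x' * a) := by
      rw [h, mul_smul_comm, smul_mul_assoc, mul_assoc, mul_assoc, hxx', mul_one]

theorem Yg_mul_XIg : Yg q * XIg q = q • (XIg q * Yg q) :=
  mul_inv_eq_smul_of_mul_eq_smul (Xg_mul_XIg q) (XIg_mul_Xg q) (Xg_mul_Yg q)

theorem Tg_mul_XIg : Tg q * XIg q = q • (XIg q * Tg q) :=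
  mul_inv_eq_smul_of_mul_eq_smul (Xg_mul_XIg q) (XIg_mul_Xg q) (Xg_mul_Tg q)

theorem XIg_mul_Yg_pow_three : (XIg q * Yg q) ^ 3 = 0 := by
  have h : (XIg q * Yg q) ^ 3 = q ^ 3 • (XIg q ^ 3 * Yg q ^ 3) :=
    calc (XIg q * Yg q) ^ 3
        = XIg q * (Yg q * XIg q) * (Yg q * XIg q) * Yg q := by noncomm_ring
      _ = q ^ 2 • (XIg q * XIg q * (Yg q * XIg q) * Yg q * Yg q) := by
        simp only [Yg_mul_XIg, mul_smul_comm, smul_mul_assoc, smul_smul, mul_assoc, pow_two]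
        simp only [← mul_assoc (Yg q) (XIg q), Yg_mul_XIg, mul_smul_comm, smul_mul_assoc,
          smul_smul, mul_assoc]
      _ = q ^ 3 • (XIg q ^ 3 * Yg q ^ 3) := by
        simp only [Yg_mul_XIg, mul_smul_comm, smul_mul_assoc, smul_smul, ← pow_succ]
        congr 1
        noncomm_ring
  rw [h, Yg_pow_three, mul_zero, smul_zero]

/-- Rewriting negation as a scalar multiple avoids the mismatch between the semiring structure of
`RingQuot` and the one underlying its ring structure, which agree only after unfolding. -/
theorem Atl_neg_eq_smul {q : ℂ} (a : Atl q) : -a = (-1 : ℂ) • a :=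
  (neg_one_smul ℂ a).symm

end Relations

section Coinverse

open MulOpposite

/-- The images of the generators under the coinverse. -/
def coinverseGen (q : ℂ) : Gen → (Atl q)ᵐᵒᵖ
  | .x => op (XIg q)
  | .xinv => op (Xg q)
  | .y => op (-(XIg q * Yg q))
  | .th => op (-(q • Tg q))

theorem lift_coinverseGen_eq_of_QRel {q : ℂ} (hq3 : q ^ 3 = 1) {a b : FA} (h : QRel q a b) :
    FreeAlgebra.lift ℂ (coinverseGen q) a = FreeAlgebra.lift ℂ (coinverseGen q) b := by
  apply unop_injective
  cases h with
  | xxi => simp [Xf, XIf, coinverseGen, Xg_mul_XIg]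
  | xix => simp [Xf, XIf, coinverseGen, XIg_mul_Xg]
  | xy => simp [Xf, Yf, coinverseGen, Atl_neg_eq_smul, mul_assoc, Yg_mul_XIg, smul_smul, mul_comm,
      -neg_smul]
  | xth => simp [Xf, Tf, coinverseGen, Atl_neg_eq_smul, Tg_mul_XIg, smul_smul, mul_comm, -neg_smul]
  | yth =>
    have hl : Tg q * (XIg q * Yg q) = q • (XIg q * (Tg q * Yg q)) := by
      rw [← mul_assoc, Tg_mul_XIg, smul_mul_assoc, mul_assoc]
    have hr : XIg q * Yg q * Tg q = q ^ 2 • (XIg q * (Tg q * Yg q)) := by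
      rw [mul_assoc, Yg_mul_Tg, mul_smul_comm]
    simp only [Yf, Tf, coinverseGen, map_mul, map_smul, FreeAlgebra.lift_ι_apply, unop_mul,
      unop_smul, unop_op, Atl_neg_eq_smul, smul_mul_assoc, mul_smul_comm, hl, hr, smul_smul]
    congr 1
    linear_combination (-q ^ 2) * hq3
  | ycube => simp [Yf, coinverseGen, Atl_neg_eq_smul, smul_pow, XIg_mul_Yg_pow_three, -neg_smul]
  | thcube => simp [Tf, coinverseGen, Atl_neg_eq_smul, smul_pow, Tg_pow_three, -neg_smul]

/-- The coinverse of `Ã`, as an algebra homomorphism into the opposite algebra. -/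
def coinverse (q : ℂ) (hq3 : q ^ 3 = 1) : Atl q →ₐ[ℂ] (Atl q)ᵐᵒᵖ :=
  RingQuot.liftAlgHom ℂ
    ⟨FreeAlgebra.lift ℂ (coinverseGen q), fun _ _ h => lift_coinverseGen_eq_of_QRel hq3 h⟩

theorem coinverse_apply_generators (q : ℂ) (hq3 : q ^ 3 = 1) :
    coinverse q hq3 (Xg q) = op (XIg q) ∧
      coinverse q hq3 (XIg q) = op (Xg q) ∧
      coinverse q hq3 (Yg q) = op (-(XIg q * Yg q)) ∧
      coinverse q hq3 (Tg q) = op (-(q • Tg q)) := by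
  simp [coinverse, Xg, XIg, Yg, Tg, Xf, XIf, Yf, Tf, coinverseGen]

theorem Atl_algHom_ext {q : ℂ} {B : Type*} [Semiring B] [Algebra ℂ B] {f g : Atl q →ₐ[ℂ] B}
    (hx : f (Xg q) = g (Xg q)) (hxi : f (XIg q) = g (XIg q)) (hy : f (Yg q) = g (Yg q))
    (ht : f (Tg q) = g (Tg q)) : f = g := by
  apply RingQuot.ringQuot_ext'
  apply FreeAlgebra.hom_ext
  funext i
  cases i
  · exact hx
  · exact hxi
  · exact hy
  · exact ht

end Coinverse

open MulOpposite in
/-- There is a unique ℂ-algebra antihomomorphism `κ : Ã → Ã` (formalized as a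
ℂ-algebra homomorphism into the opposite algebra) with `κ(x) = x⁻¹`, `κ(x⁻¹) = x`,
`κ(y) = −x⁻¹y`, `κ(θ) = −qθ`. -/
theorem coinverse_exists_unique (q : ℂ) (hq3 : q ^ 3 = 1) (hq1 : q ≠ 1) :
    ∃! κ : Atl q →ₐ[ℂ] (Atl q)ᵐᵒᵖ,
      κ (Xg q) = op (XIg q) ∧
      κ (XIg q) = op (Xg q) ∧
      κ (Yg q) = op (-(XIg q * Yg q)) ∧
      κ (Tg q) = op (-(q • Tg q)) := by
  obtain ⟨hx, hxi, hy, ht⟩ := coinverse_apply_generators q hq3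
  refine ⟨coinverse q hq3, ⟨hx, hxi, hy, ht⟩, ?_⟩
  rintro κ ⟨hx', hxi', hy', ht'⟩
  exact Atl_algHom_ext (hx'.trans hx.symm) (hxi'.trans hxi.symm) (hy'.trans hy.symm)
    (ht'.trans ht.symm)
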